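/- Let ζ be a spacelike submanifold of co-dimension m = 2 in a spacetime (M,g), with future-pointing null normals n^μ and ℓ^μ at q ∈ ζ, γ the null geodesic with initial tangent n, N its tangent field, L the parallel propagation of ℓ along γ, and P^{μν} the parallel propagation along γ of the projector onto ζ. Then P^{μν} = g^{μν} − (N_ρ L^ρ)⁻¹ ( N^μ L^ν + N^ν L^μ ) along γ, and consequently the curvature condition R_{μνρσ} N^μ N^ρ P^{νσ} ≥ 0 along γ is equivalent to the null convergence condition R_{μν} N^μ N^ν ≥ 0 along γ. -/

import Mathlib

open Filter MeasureTheory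
open scoped BigOperators Topology

noncomputable section

namespace Paper

variable {ι : Type*} [Fintype ι] [DecidableEq ι]
variable {κ : Type*} [Fintype κ] [DecidableEq κ]

/-- Coordinate partial derivative of a scalar field in the direction `ρ`. -/
def pd (h : (ι → ℝ) → ℝ) (ρ : ι) (x : ι → ℝ) : ℝ :=
  fderiv ℝ h x (Pi.single ρ 1)

/-- The inverse metric. -/
def ginv (g : (ι → ℝ) → Matrix ι ι ℝ) (x : ι → ℝ) : Matrix ι ι ℝ :=
  (g x)⁻¹

/-- Christoffel symbols `Γ^μ_{ρσ} = ½ g^{μν}(∂_ρ g_{νσ} + ∂_σ g_{νρ} − ∂_ν g_{ρσ})`. -/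
def Γc (g : (ι → ℝ) → Matrix ι ι ℝ) (μ ρ σ : ι) (x : ι → ℝ) : ℝ :=
  (1 / 2) * ∑ ν, ginv g x μ ν *
    (pd (fun y => g y ν σ) ρ x + pd (fun y => g y ν ρ) σ x - pd (fun y => g y ρ σ) ν x)

/-- Riemann curvature tensor `R^α_{βμν}`. -/
def Riem (g : (ι → ℝ) → Matrix ι ι ℝ) (α β μ ν : ι) (x : ι → ℝ) : ℝ :=
  pd (Γc g α ν β) μ x - pd (Γc g α μ β) ν x
    + ∑ lam, Γc g α μ lam x * Γc g lam ν β x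
    - ∑ lam, Γc g α ν lam x * Γc g lam μ β x

/-- Riemann tensor with the first index lowered, `R_{μνρσ} = g_{μλ} R^λ_{νρσ}`. -/
def RiemLow (g : (ι → ℝ) → Matrix ι ι ℝ) (μ ν ρ σ : ι) (x : ι → ℝ) : ℝ :=
  ∑ lam, g x μ lam * Riem g lam ν ρ σ x

/-- Ricci tensor `R_{μν} = R^ρ_{μρν}`. -/
def Ric (g : (ι → ℝ) → Matrix ι ι ℝ) (μ ν : ι) (x : ι → ℝ) : ℝ :=
  ∑ ρ, Riem g ρ μ ρ ν x

/-- Scalar product of two vectors with respect to the metric at `x`. -/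
def sq (g : (ι → ℝ) → Matrix ι ι ℝ) (x : ι → ℝ) (v w : ι → ℝ) : ℝ :=
  ∑ μ, ∑ ν, g x μ ν * v μ * w ν

/-- Velocity (tangent vector field) of a parametrized curve. -/
def vel (γ : ℝ → ι → ℝ) (u : ℝ) : ι → ℝ :=
  fun μ => deriv (fun w => γ w μ) u

/-- Covariant derivative, along the curve `γ`, of a vector field `V` given along `γ`. -/
def covD (g : (ι → ℝ) → Matrix ι ι ℝ) (γ V : ℝ → ι → ℝ) (u : ℝ) (μ : ι) : ℝ :=
  deriv (fun w => V w μ) u + ∑ ρ, ∑ σ, Γc g μ ρ σ (γ u) * vel γ u ρ * V u σ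

/-- The (affinely parametrized) geodesic equation at parameter value `u`. -/
def GeodesicAt (g : (ι → ℝ) → Matrix ι ι ℝ) (γ : ℝ → ι → ℝ) (u : ℝ) : Prop :=
  ∀ μ, covD g γ (vel γ) u μ = 0

/-- `γ` is an affinely parametrized geodesic of `g`. -/
def IsGeodesic (g : (ι → ℝ) → Matrix ι ι ℝ) (γ : ℝ → ι → ℝ) : Prop :=
  ∀ u, GeodesicAt g γ u

/-- `E` is parallelly transported along `γ`. -/
def IsParallel (g : (ι → ℝ) → Matrix ι ι ℝ) (γ E : ℝ → ι → ℝ) : Prop :=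
  ∀ u μ, covD g γ E u μ = 0

def SmoothCurve (γ : ℝ → ι → ℝ) : Prop :=
  ∀ μ, ContDiff ℝ (⊤ : ℕ∞) fun u => γ u μ

/-- A smooth symmetric everywhere-nondegenerate metric. -/
def SmoothMetric (g : (ι → ℝ) → Matrix ι ι ℝ) : Prop :=
  (∀ μ ν, ContDiff ℝ (⊤ : ℕ∞) fun x => g x μ ν) ∧
    (∀ x μ ν, g x μ ν = g x ν μ) ∧ ∀ x, IsUnit (g x).det

/-- Lorentzian signature `(−,+,…,+)`: there is a timelike vector whose `g`-orthogonal
complement is positive definite. -/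
def Lorentzian (g : (ι → ℝ) → Matrix ι ι ℝ) : Prop :=
  SmoothMetric g ∧
    ∀ x, ∃ t : ι → ℝ, sq g x t t < 0 ∧ ∀ v : ι → ℝ, sq g x t v = 0 → v ≠ 0 → 0 < sq g x v v

/-- Riemannian (positive definite) metric. -/
def Riemannian (g : (ι → ℝ) → Matrix ι ι ℝ) : Prop :=
  SmoothMetric g ∧ ∀ x, ∀ v : ι → ℝ, v ≠ 0 → 0 < sq g x v v

def NullVec (g : (ι → ℝ) → Matrix ι ι ℝ) (x v : ι → ℝ) : Prop :=
  sq g x v v = 0 ∧ v ≠ 0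

/-- A time orientation: an everywhere timelike vector field. -/
def TimeOrientation (g : (ι → ℝ) → Matrix ι ι ℝ) (T : (ι → ℝ) → ι → ℝ) : Prop :=
  ∀ x, sq g x (T x) (T x) < 0

/-- `v` is a future-pointing causal vector at `x` (wrt the time orientation `T`). -/
def FutureCausal (g : (ι → ℝ) → Matrix ι ι ℝ) (T : (ι → ℝ) → ι → ℝ) (x v : ι → ℝ) : Prop :=
  sq g x v v ≤ 0 ∧ v ≠ 0 ∧ sq g x (T x) v < 0

/-- `S` is met exactly once by every inextendible future-directed causal curve
(inextendibility being encoded by parametrization by Euclidean arclength on all of `ℝ`). -/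
def IsCauchySurface (g : (ι → ℝ) → Matrix ι ι ℝ) (T : (ι → ℝ) → ι → ℝ)
    (S : Set (ι → ℝ)) : Prop :=
  ∀ γ : ℝ → ι → ℝ, (∀ μ, Differentiable ℝ fun u => γ u μ) →
    (∀ u, FutureCausal g T (γ u) (vel γ u)) →
    (∀ u, ∑ μ, (vel γ u μ) ^ 2 = 1) → ∃! u, γ u ∈ S

/-- `g`-gradient vector of a scalar function. -/
def gradVec (g : (ι → ℝ) → Matrix ι ι ℝ) (τ : (ι → ℝ) → ℝ) (x : ι → ℝ) : ι → ℝ :=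
  fun μ => ∑ ν, ginv g x μ ν * pd τ ν x

/-- Existence of a non-compact (spacelike) Cauchy hypersurface, encoded as a regular
level set of a smooth function with timelike gradient. -/
def HasNoncompactCauchySurface (g : (ι → ℝ) → Matrix ι ι ℝ)
    (T : (ι → ℝ) → ι → ℝ) : Prop :=
  ∃ τ : (ι → ℝ) → ℝ, ContDiff ℝ (⊤ : ℕ∞) τ ∧ ¬ IsCompact {x | τ x = 0} ∧
    (∀ x, τ x = 0 → sq g x (gradVec g τ x) (gradVec g τ x) < 0) ∧
    IsCauchySurface g T {x | τ x = 0}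

/-- Null geodesic completeness: every null initial datum extends to a geodesic
defined for all values of the affine parameter. -/
def NullComplete (g : (ι → ℝ) → Matrix ι ι ℝ) : Prop :=
  ∀ x v : ι → ℝ, NullVec g x v →
    ∃ γ : ℝ → ι → ℝ, SmoothCurve γ ∧ γ 0 = x ∧ vel γ 0 = v ∧ IsGeodesic g γ

/-- Future null geodesic completeness. -/
def FutureNullComplete (g : (ι → ℝ) → Matrix ι ι ℝ) (T : (ι → ℝ) → ι → ℝ) : Prop :=
  ∀ x v : ι → ℝ, NullVec g x v → FutureCausal g T x v →
    ∃ γ : ℝ → ι → ℝ, SmoothCurve γ ∧ γ 0 = x ∧ vel γ 0 = v ∧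
      ∀ u, 0 ≤ u → GeodesicAt g γ u

/-! ### Submanifolds given implicitly as regular zero sets -/

/-- Differential (lowered normal covectors) of the defining map `F`. -/
def dFm (F : (ι → ℝ) → κ → ℝ) (α : κ) (μ : ι) (x : ι → ℝ) : ℝ :=
  pd (fun y => F y α) μ x

/-- The normal vectors `ν_α = grad F^α` spanning the normal space. -/
def normalBasis (g : (ι → ℝ) → Matrix ι ι ℝ) (F : (ι → ℝ) → κ → ℝ) (α : κ)
    (x : ι → ℝ) : ι → ℝ :=
  fun μ => ∑ ν, ginv g x μ ν * dFm F α ν x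

/-- Gram matrix `W_{αβ} = g(ν_α, ν_β)` of the normals. -/
def gram (g : (ι → ℝ) → Matrix ι ι ℝ) (F : (ι → ℝ) → κ → ℝ) (x : ι → ℝ) :
    Matrix κ κ ℝ :=
  Matrix.of fun α β => ∑ μ, dFm F α μ x * normalBasis g F β x μ

/-- The (contravariant) orthogonal projector onto the tangent space of `{F = 0}`. -/
def tanProj (g : (ι → ℝ) → Matrix ι ι ℝ) (F : (ι → ℝ) → κ → ℝ) (x : ι → ℝ)
    (μ ν : ι) : ℝ :=
  ginv g x μ ν -
    ∑ α, ∑ β, (gram g F x)⁻¹ α β * normalBasis g F α x μ * normalBasis g F β x ν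

/-- Covariant Hessian `∇_μ ∇_ν F^α`. -/
def hessF (g : (ι → ℝ) → Matrix ι ι ℝ) (F : (ι → ℝ) → κ → ℝ) (α : κ) (μ ν : ι)
    (x : ι → ℝ) : ℝ :=
  pd (fun y => dFm F α ν y) μ x - ∑ lam, Γc g lam μ ν x * dFm F α lam x

/-- The expansion `θ(n)` of the submanifold `{F = 0}` along the normal
`n = ∑ c_α ν_α`, namely `θ(n) = ∑_α c_α h^{μν} ∇_μ∇_ν F^α`. -/
def expansionCoeff (g : (ι → ℝ) → Matrix ι ι ℝ) (F : (ι → ℝ) → κ → ℝ) (x : ι → ℝ)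
    (c : κ → ℝ) : ℝ :=
  ∑ α, c α * ∑ μ, ∑ ν, tanProj g F x μ ν * hessF g F α μ ν x

/-- `v` is tangent to the level set `{F = 0}` at `x`. -/
def TangentTo (F : (ι → ℝ) → κ → ℝ) (x v : ι → ℝ) : Prop :=
  ∀ α, ∑ μ, dFm F α μ x * v μ = 0

/-- The normal vector with components `c` in the basis of normals. -/
def NormalComb (g : (ι → ℝ) → Matrix ι ι ℝ) (F : (ι → ℝ) → κ → ℝ) (x : ι → ℝ)
    (c : κ → ℝ) : ι → ℝ :=
  fun μ => ∑ α, c α * normalBasis g F α x μ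

/-- A closed (compact without boundary) spacelike submanifold, given as the regular
zero set of the smooth map `F`, of co-dimension `card κ`. -/
def ClosedSpacelikeSubmanifold (g : (ι → ℝ) → Matrix ι ι ℝ)
    (F : (ι → ℝ) → κ → ℝ) : Prop :=
  (∀ α, ContDiff ℝ (⊤ : ℕ∞) fun x => F x α) ∧
    IsCompact {x | ∀ α, F x α = 0} ∧ {x | ∀ α, F x α = 0}.Nonempty ∧
    (∀ x, (∀ α, F x α = 0) → IsUnit (gram g F x).det) ∧
    (∀ x, (∀ α, F x α = 0) → ∀ v, TangentTo F x v → v ≠ 0 → 0 < sq g x v v)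

/-- Future-trapped: every future-pointing causal normal has negative expansion. -/
def FutureTrapped (g : (ι → ℝ) → Matrix ι ι ℝ) (T : (ι → ℝ) → ι → ℝ)
    (F : (ι → ℝ) → κ → ℝ) : Prop :=
  ∀ x, (∀ α, F x α = 0) → ∀ c : κ → ℝ,
    FutureCausal g T x (NormalComb g F x c) → expansionCoeff g F x c < 0

/-! ### Warped products -/

def basePt {d₁ d₂ : ℕ} (x : (Fin d₁ ⊕ Fin d₂) → ℝ) : Fin d₁ → ℝ :=
  fun a => x (Sum.inl a)

def fibPt {d₁ d₂ : ℕ} (x : (Fin d₁ ⊕ Fin d₂) → ℝ) : Fin d₂ → ℝ :=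
  fun i => x (Sum.inr i)

/-- The warped product metric `g = ĝ + f² ḡ` in adapted coordinates. -/
def warped {d₁ d₂ : ℕ} (gB : (Fin d₁ → ℝ) → Matrix (Fin d₁) (Fin d₁) ℝ)
    (gF : (Fin d₂ → ℝ) → Matrix (Fin d₂) (Fin d₂) ℝ) (f : (Fin d₁ → ℝ) → ℝ) :
    ((Fin d₁ ⊕ Fin d₂) → ℝ) → Matrix (Fin d₁ ⊕ Fin d₂) (Fin d₁ ⊕ Fin d₂) ℝ :=
  fun x => Matrix.of fun μ ν =>
    match μ, ν with
    | Sum.inl a, Sum.inl b => gB (basePt x) a b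
    | Sum.inl _, Sum.inr _ => 0
    | Sum.inr _, Sum.inl _ => 0
    | Sum.inr i, Sum.inr j => (f (basePt x)) ^ 2 * gF (fibPt x) i j

/-- Projection of a spacetime curve to the base. -/
def baseCurve {d₁ d₂ : ℕ} (γ : ℝ → (Fin d₁ ⊕ Fin d₂) → ℝ) : ℝ → Fin d₁ → ℝ :=
  fun u => basePt (γ u)

/-- Projection of a spacetime curve to the fiber. -/
def fibCurve {d₁ d₂ : ℕ} (γ : ℝ → (Fin d₁ ⊕ Fin d₂) → ℝ) : ℝ → Fin d₂ → ℝ :=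
  fun u => fibPt (γ u)

/-- Lift of a base vector to the warped product (vanishing fiber components). -/
def liftVec {d₁ d₂ : ℕ} (v : Fin d₁ → ℝ) : (Fin d₁ ⊕ Fin d₂) → ℝ :=
  fun μ => match μ with
  | Sum.inl a => v a
  | Sum.inr _ => 0

/-- Lift of a base vector field (e.g. a time orientation) to the warped product. -/
def liftT {d₁ d₂ : ℕ} (T : (Fin d₁ → ℝ) → Fin d₁ → ℝ) :
    ((Fin d₁ ⊕ Fin d₂) → ℝ) → (Fin d₁ ⊕ Fin d₂) → ℝ :=
  fun x => liftVec (T (basePt x))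

/-- Defining map of the lift `ζ_p ⊆ Y_p` of the submanifold `{Fb = 0} ⊆ Y`. -/
def liftF {d₁ d₂ m' : ℕ} (p : Fin d₁ → ℝ) (Fb : (Fin d₂ → ℝ) → Fin m' → ℝ) :
    ((Fin d₁ ⊕ Fin d₂) → ℝ) → (Fin d₁ ⊕ Fin m') → ℝ :=
  fun x α => match α with
  | Sum.inl a => x (Sum.inl a) - p a
  | Sum.inr β => Fb (fibPt x) β

/-- Covariant Hessian `∇_μ∇_ν f` of a scalar function. -/
def hess (g : (ι → ℝ) → Matrix ι ι ℝ) (f : (ι → ℝ) → ℝ) (μ ν : ι) (x : ι → ℝ) : ℝ :=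
  pd (fun y => pd f ν y) μ x - ∑ lam, Γc g lam μ ν x * pd f lam x

/-- `∇^μ f ∇_μ f`. -/
def gradSq (g : (ι → ℝ) → Matrix ι ι ℝ) (f : (ι → ℝ) → ℝ) (x : ι → ℝ) : ℝ :=
  ∑ μ, ∑ ν, ginv g x μ ν * pd f μ x * pd f ν x

/-! ### Parametrized submanifolds and their expansions -/

/-- Partial derivative of a parametrization `φ`. -/
def dpar {k : ℕ} (φ : (Fin k → ℝ) → ι → ℝ) (A : Fin k) (μ : ι)
    (y : Fin k → ℝ) : ℝ :=
  fderiv ℝ (fun z => φ z μ) y (Pi.single A 1)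

/-- First fundamental form of a parametrized submanifold. -/
def firstFF {k : ℕ} (g : (ι → ℝ) → Matrix ι ι ℝ) (φ : (Fin k → ℝ) → ι → ℝ)
    (y : Fin k → ℝ) : Matrix (Fin k) (Fin k) ℝ :=
  Matrix.of fun A B => ∑ μ, ∑ ν, g (φ y) μ ν * dpar φ A μ y * dpar φ B ν y

/-- The expansion `θ(n) = n_μ H^μ` of a parametrized submanifold along a normal `n`,
via `θ(n) = −γ^{AB} n_μ (∂_A∂_B φ^μ + Γ^μ_{ρσ} ∂_A φ^ρ ∂_B φ^σ)`. -/
def expansionPar {k : ℕ} (g : (ι → ℝ) → Matrix ι ι ℝ) (φ : (Fin k → ℝ) → ι → ℝ)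
    (y : Fin k → ℝ) (n : ι → ℝ) : ℝ :=
  - ∑ A, ∑ B, (firstFF g φ y)⁻¹ A B *
      ∑ μ, (∑ ν, g (φ y) μ ν * n ν) *
        (fderiv ℝ (fun z => dpar φ B μ z) y (Pi.single A 1)
          + ∑ ρ, ∑ σ, Γc g μ ρ σ (φ y) * dpar φ A ρ y * dpar φ B σ y)

/-!
Parallel transport preserves scalar products, so the transported vectors `N`, `L`, `E_A` form at
every point of `γ` a basis with block Gram matrix: the first fundamental form, and a hyperbolic
block for the null pair. Writing `F` for the matrix with these vectors as rows, the identity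
`g⁻¹ = Fᵀ (F g Fᵀ)⁻¹ F` splits the inverse metric into the projector and the `N`-`L` terms. Those
terms drop out of `R_{μνρσ} N^μ N^ρ P^{νσ}` since the Riemann tensor is antisymmetric in each pair
of indices. Antisymmetry in the first pair expresses that the connection is metric,
`∂_ρ g = gΓ_ρ + (gΓ_ρ)ᵀ`: apply `∂_σ` and antisymmetrize in `ρ, σ`.
-/

open scoped Matrix

section Matrix

variable {m n R : Type*} [Fintype m]

lemma inv_eq_transpose_mul_inv_gram_mul [DecidableEq m] [Fintype n] [DecidableEq n] [CommRing R]
    (hcard : Fintype.card m = Fintype.card n)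
    (G : Matrix m m R) (F : Matrix n m R) (hF : IsUnit (F * G * Fᵀ).det) :
    G⁻¹ = Fᵀ * (F * G * Fᵀ)⁻¹ * F := by
  have left_inv : (F * G * Fᵀ)⁻¹ * F * G * Fᵀ = 1 := by
    simpa only [Matrix.mul_assoc] using Matrix.nonsing_inv_mul _ hF
  have right_inv : Fᵀ * ((F * G * Fᵀ)⁻¹ * F * G) = 1 :=
    (Matrix.mul_eq_one_comm_of_card_eq _ _ _ hcard.symm).1 left_inv
  exact Matrix.inv_eq_left_inv (by simpa only [Matrix.mul_assoc] using right_inv)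

lemma fromBlocks_hyperbolic_mul_inv [DecidableEq m] {K : Type*} [Field K] {h : Matrix m m K}
    (hh : IsUnit h.det) {c : K} (hc : c ≠ 0) :
    Matrix.fromBlocks h 0 0 !![0, c; c, 0] * Matrix.fromBlocks h⁻¹ 0 0 !![0, c⁻¹; c⁻¹, 0] = 1 := by
  have hyperbolic_mul_inv : !![0, c; c, 0] * !![0, c⁻¹; c⁻¹, 0] = 1 := by
    simp [hc, Matrix.one_fin_two]
  simp [Matrix.fromBlocks_multiply, hyperbolic_mul_inv, Matrix.mul_nonsing_inv h hh]

lemma sum_sum_mul_mul_eq_zero_of_antisymm [CommRing R] [NoZeroDivisors R] [CharZero R]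
    {a : m → m → R} (ha : ∀ i j, a i j = -a j i) (v : m → R) :
    ∑ i, ∑ j, a i j * v i * v j = 0 := by
  refine CharZero.eq_neg_self_iff.1 ?_
  calc ∑ i, ∑ j, a i j * v i * v j = ∑ j, ∑ i, a i j * v i * v j := Finset.sum_comm
    _ = -∑ i, ∑ j, a i j * v i * v j := by
      simp only [← Finset.sum_neg_distrib]
      refine Finset.sum_congr rfl fun j _ => Finset.sum_congr rfl fun i _ => ?_
      rw [ha i j]; ring

variable [DecidableEq m] {V : Type*} [NormedAddCommGroup V] [NormedSpace ℝ V] {k : WithTop ℕ∞}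

lemma contDiff_matrix_det {A : V → Matrix m m ℝ} (hA : ∀ i j, ContDiff ℝ k fun x => A x i j) :
    ContDiff ℝ k fun x => (A x).det := by
  simp only [Matrix.det_apply']
  exact ContDiff.sum fun s _ => contDiff_const.mul (contDiff_prod fun i _ => hA _ _)

lemma contDiff_matrix_inv_apply {A : V → Matrix m m ℝ}
    (hA : ∀ i j, ContDiff ℝ k fun x => A x i j) (hdet : ∀ x, IsUnit (A x).det) (i j : m) :
    ContDiff ℝ k fun x => (A x)⁻¹ i j := by
  have cramer : (fun x => (A x)⁻¹ i j) =
      fun x => ((A x).det)⁻¹ * ((A x).updateRow j (Pi.single i 1)).det := by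
    funext x
    simp [Matrix.inv_def, Matrix.adjugate_apply, Ring.inverse_eq_inv']
  rw [cramer]
  refine ((contDiff_matrix_det hA).inv fun x => (hdet x).ne_zero).mul
    (contDiff_matrix_det fun a b => ?_)
  rcases eq_or_ne a j with rfl | hne
  · simpa only [Matrix.updateRow_self] using contDiff_const
  · simpa only [Matrix.updateRow_ne hne] using hA a b

end Matrix

section PartialDerivatives

lemma contDiff_pd {k l : WithTop ℕ∞} {f : (ι → ℝ) → ℝ} (hf : ContDiff ℝ l f) (hkl : k + 1 ≤ l)
    (ρ : ι) : ContDiff ℝ k (pd f ρ) :=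
  (hf.fderiv_right hkl).clm_apply contDiff_const

lemma pd_comm {f : (ι → ℝ) → ℝ} {x : ι → ℝ} (hf : ContDiffAt ℝ 2 f x) (ρ σ : ι) :
    pd (pd f ρ) σ x = pd (pd f σ) ρ x := by
  have hdiff : DifferentiableAt ℝ (fderiv ℝ f) x :=
    (hf.fderiv_right (m := 1) (by norm_num)).differentiableAt one_ne_zero
  have pd_pd (a b : ι) :
      pd (pd f a) b x = fderiv ℝ (fderiv ℝ f) x (Pi.single b 1) (Pi.single a 1) := by
    change fderiv ℝ (fun y => fderiv ℝ f y (Pi.single a 1)) x (Pi.single b 1) = _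
    simp [fderiv_clm_apply hdiff (differentiableAt_const _)]
  rw [pd_pd, pd_pd]
  exact (hf.isSymmSndFDerivAt (by simp)).eq _ _

lemma fderiv_apply_eq_sum_pd (f : (ι → ℝ) → ℝ) (x v : ι → ℝ) :
    fderiv ℝ f x v = ∑ ρ, v ρ * pd f ρ x := by
  conv_lhs => rw [pi_eq_sum_univ' v]
  simp only [map_sum, map_smul, smul_eq_mul]
  rfl

variable {m n p : Type*}

/-- The entrywise partial derivative `∂_ρ A` of a matrix-valued function `A`. -/
def pdMatrix (A : (ι → ℝ) → Matrix m n ℝ) (ρ : ι) (x : ι → ℝ) : Matrix m n ℝ :=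
  Matrix.of fun a b => pd (fun y => A y a b) ρ x

omit [Fintype ι] in
lemma pdMatrix_transpose (A : (ι → ℝ) → Matrix m n ℝ) (ρ : ι) (x : ι → ℝ) :
    pdMatrix (fun y => (A y)ᵀ) ρ x = (pdMatrix A ρ x)ᵀ := rfl

lemma pdMatrix_comm {A : (ι → ℝ) → Matrix m n ℝ} {x : ι → ℝ}
    (hA : ∀ a b, ContDiffAt ℝ 2 (fun y => A y a b) x) (ρ σ : ι) :
    pdMatrix (pdMatrix A ρ) σ x = pdMatrix (pdMatrix A σ) ρ x :=
  Matrix.ext fun a b => pd_comm (hA a b) ρ σ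

omit [Fintype ι] in
lemma pdMatrix_add [Finite ι] {A B : (ι → ℝ) → Matrix m n ℝ} {x : ι → ℝ}
    (hA : ∀ a b, DifferentiableAt ℝ (fun y => A y a b) x)
    (hB : ∀ a b, DifferentiableAt ℝ (fun y => B y a b) x) (ρ : ι) :
    pdMatrix (fun y => A y + B y) ρ x = pdMatrix A ρ x + pdMatrix B ρ x := by
  cases nonempty_fintype ι
  ext a b
  simp [pdMatrix, pd, fderiv_fun_add (hA a b) (hB a b)]

omit [Fintype ι] in
lemma pdMatrix_mul [Finite ι] [Fintype n] {A : (ι → ℝ) → Matrix m n ℝ} {B : (ι → ℝ) → Matrix n p ℝ}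
    {x : ι → ℝ}
    (hA : ∀ a b, DifferentiableAt ℝ (fun y => A y a b) x)
    (hB : ∀ a b, DifferentiableAt ℝ (fun y => B y a b) x) (ρ : ι) :
    pdMatrix (fun y => A y * B y) ρ x = pdMatrix A ρ x * B x + A x * pdMatrix B ρ x := by
  cases nonempty_fintype ι
  ext a b
  simp only [pdMatrix, pd, Matrix.mul_apply, Matrix.of_apply, Matrix.add_apply]
  rw [fderiv_fun_sum fun c _ => (hA a c).fun_mul (hB c b), _root_.sum_apply,
    ← Finset.sum_add_distrib]
  refine Finset.sum_congr rfl fun c _ => ?_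
  simp only [fderiv_fun_mul (hA a c) (hB c b), _root_.add_apply, _root_.smul_apply, smul_eq_mul]
  ring

end PartialDerivatives

section Metric

variable {g : (ι → ℝ) → Matrix ι ι ℝ}

lemma SmoothMetric.isSymm (hg : SmoothMetric g) (x : ι → ℝ) : (g x).IsSymm :=
  Matrix.IsSymm.ext fun μ ν => hg.2.1 x ν μ

lemma SmoothMetric.differentiable (hg : SmoothMetric g) (μ ν : ι) :
    Differentiable ℝ fun x => g x μ ν :=
  (hg.1 μ ν).differentiable (by simp)

omit [DecidableEq ι] in
lemma sq_eq_dotProduct (g : (ι → ℝ) → Matrix ι ι ℝ) (x v w : ι → ℝ) :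
    sq g x v w = v ⬝ᵥ g x *ᵥ w := by
  simp only [sq, dotProduct, Matrix.mulVec, Finset.mul_sum]
  exact Finset.sum_congr rfl fun μ _ => Finset.sum_congr rfl fun ν _ => by ring

omit [DecidableEq ι] in
lemma sq_comm {x : ι → ℝ} (hx : (g x).IsSymm) (v w : ι → ℝ) : sq g x v w = sq g x w v := by
  rw [sq_eq_dotProduct, sq_eq_dotProduct, Matrix.dotProduct_mulVec, dotProduct_comm,
    ← Matrix.mulVec_transpose, hx.eq]

omit [DecidableEq ι] in
lemma mul_mul_transpose_apply_eq_sq {n : Type*} (g : (ι → ℝ) → Matrix ι ι ℝ) (x : ι → ℝ)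
    (F : Matrix n ι ℝ) (a b : n) : (F * g x * Fᵀ) a b = sq g x (F a) (F b) := by
  rw [sq_eq_dotProduct, Matrix.mul_assoc]
  rfl

end Metric

section Connection

variable {g : (ι → ℝ) → Matrix ι ι ℝ}

/-- The connection matrix `(Γ_ρ)^μ_σ = Γ^μ_{ρσ}`: the covariant derivative in the coordinate
direction `ρ` is `∂_ρ + Γ_ρ`. -/
def conn (g : (ι → ℝ) → Matrix ι ι ℝ) (ρ : ι) (x : ι → ℝ) : Matrix ι ι ℝ :=
  Matrix.of fun μ σ => Γc g μ ρ σ x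

lemma differentiable_conn (hg : SmoothMetric g) (ρ μ σ : ι) :
    Differentiable ℝ fun x => conn g ρ x μ σ := by
  have hpd (a b c : ι) : ContDiff ℝ 1 (pd (fun y => g y a b) c) :=
    contDiff_pd (hg.1 a b) (WithTop.coe_le_coe.2 le_top) c
  have hinv (a b : ι) : ContDiff ℝ 1 fun x => ginv g x a b :=
    contDiff_matrix_inv_apply (fun i j => (hg.1 i j).of_le (WithTop.coe_le_coe.2 le_top)) hg.2.2 a b
  refine ContDiff.differentiable (contDiff_const.mul (ContDiff.sum fun ν _ => ?_)) one_ne_zero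
  exact (hinv μ ν).mul (((hpd _ _ _).add (hpd _ _ _)).sub (hpd _ _ _))

lemma mul_conn_apply {x : ι → ℝ} (hx : IsUnit (g x).det) (ρ μ σ : ι) :
    (g x * conn g ρ x) μ σ = (1 / 2) *
      (pd (fun y => g y μ σ) ρ x + pd (fun y => g y μ ρ) σ x - pd (fun y => g y ρ σ) μ x) := by
  have conn_eq : (fun l => conn g ρ x l σ) = (g x)⁻¹ *ᵥ fun ν => (1 / 2) *
      (pd (fun y => g y ν σ) ρ x + pd (fun y => g y ν ρ) σ x - pd (fun y => g y ρ σ) ν x) := by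
    funext l
    simp only [conn, Γc, ginv, Matrix.of_apply, Matrix.mulVec, dotProduct, Finset.mul_sum]
    exact Finset.sum_congr rfl fun ν _ => by ring
  calc (g x * conn g ρ x) μ σ = (g x *ᵥ fun l => conn g ρ x l σ) μ := rfl
    _ = _ := by
      rw [conn_eq, Matrix.mulVec_mulVec, Matrix.mul_nonsing_inv _ hx, Matrix.one_mulVec]

lemma pdMatrix_metric (hg : SmoothMetric g) (ρ : ι) (x : ι → ℝ) :
    pdMatrix g ρ x = g x * conn g ρ x + (g x * conn g ρ x)ᵀ := by
  have symm (a b : ι) : (fun y => g y a b) = fun y => g y b a := funext fun y => hg.2.1 y a b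
  ext μ σ
  rw [Matrix.add_apply, Matrix.transpose_apply, mul_conn_apply (hg.2.2 x),
    mul_conn_apply (hg.2.2 x), symm σ μ, symm σ ρ, symm ρ μ]
  simp only [pdMatrix, Matrix.of_apply]
  ring

lemma sum_smul_pdMatrix_metric (hg : SmoothMetric g) (x v : ι → ℝ) :
    ∑ ρ, v ρ • pdMatrix g ρ x =
      g x * (∑ ρ, v ρ • conn g ρ x) + (g x * ∑ ρ, v ρ • conn g ρ x)ᵀ := by
  simp only [pdMatrix_metric hg, smul_add, Finset.sum_add_distrib, Matrix.mul_sum,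
    Matrix.mul_smul, Matrix.transpose_sum, Matrix.transpose_smul]

lemma covD_eq_vel_add_mulVec (g : (ι → ℝ) → Matrix ι ι ℝ) (γ V : ℝ → ι → ℝ) (u : ℝ) :
    covD g γ V u = vel V u + (∑ ρ, vel γ u ρ • conn g ρ (γ u)) *ᵥ V u := by
  funext μ
  simp only [covD, vel, conn, Matrix.sum_mulVec, Matrix.mulVec, dotProduct, Pi.add_apply,
    Matrix.smul_apply, Matrix.of_apply, smul_eq_mul, Finset.sum_apply, add_right_inj]
  exact Finset.sum_congr rfl fun ρ _ => Finset.sum_congr rfl fun σ _ => by ring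

omit [Fintype ι] [DecidableEq ι] in
lemma SmoothCurve.differentiable [Finite ι] {γ : ℝ → ι → ℝ} (hγ : SmoothCurve γ) :
    Differentiable ℝ γ := by
  cases nonempty_fintype ι
  exact differentiable_pi.2 fun μ => (hγ μ).differentiable (by simp)

omit [Fintype ι] [DecidableEq ι] in
lemma SmoothCurve.vel {γ : ℝ → ι → ℝ} (hγ : SmoothCurve γ) : SmoothCurve (vel γ) :=
  fun μ => (contDiff_infty_iff_deriv.1 (hγ μ)).2

omit [Fintype ι] [DecidableEq ι] in
lemma hasDerivAt_vel [Finite ι] {V : ℝ → ι → ℝ} {u : ℝ} (hV : DifferentiableAt ℝ V u) :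
    HasDerivAt V (vel V u) u := by
  cases nonempty_fintype ι
  exact hasDerivAt_pi.2 fun μ => (differentiableAt_pi.1 hV μ).hasDerivAt

lemma hasDerivAt_comp_curve {f : (ι → ℝ) → ℝ} {γ : ℝ → ι → ℝ} {u : ℝ}
    (hf : DifferentiableAt ℝ f (γ u)) (hγ : DifferentiableAt ℝ γ u) :
    HasDerivAt (fun w => f (γ w)) (∑ ρ, vel γ u ρ * pd f ρ (γ u)) u := by
  rw [← fderiv_apply_eq_sum_pd]
  exact hf.hasFDerivAt.comp_hasDerivAt u (hasDerivAt_vel hγ)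

theorem hasDerivAt_sq (hg : SmoothMetric g) {γ V W : ℝ → ι → ℝ} {u : ℝ}
    (hγ : DifferentiableAt ℝ γ u) (hV : DifferentiableAt ℝ V u) (hW : DifferentiableAt ℝ W u) :
    HasDerivAt (fun w => sq g (γ w) (V w) (W w))
      (sq g (γ u) (covD g γ V u) (W u) + sq g (γ u) (V u) (covD g γ W u)) u := by
  set G := g (γ u)
  set A := ∑ ρ, vel γ u ρ • conn g ρ (γ u) with hA
  have hGA : ∑ ρ, vel γ u ρ • pdMatrix g ρ (γ u) = G * A + (G * A)ᵀ :=
    sum_smul_pdMatrix_metric hg _ _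
  have hdg (μ ν : ι) : HasDerivAt (fun w => g (γ w) μ ν) ((G * A + (G * A)ᵀ) μ ν) u := by
    rw [← hGA]
    simpa [Matrix.sum_apply, pdMatrix] using
      hasDerivAt_comp_curve (hg.differentiable μ ν (γ u)) hγ
  have hdV := hasDerivAt_pi.1 (hasDerivAt_vel hV)
  have hdW := hasDerivAt_pi.1 (hasDerivAt_vel hW)
  have leibniz := HasDerivAt.fun_sum (u := Finset.univ) fun μ _ =>
    HasDerivAt.fun_sum (u := Finset.univ) fun ν _ => ((hdg μ ν).fun_mul (hdV μ)).fun_mul (hdW ν)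
  refine leibniz.congr_deriv ?_
  have expand : ∑ μ, ∑ ν, (((G * A + (G * A)ᵀ) μ ν * V u μ + G μ ν * vel V u μ) * W u ν +
      G μ ν * V u μ * vel W u ν) = V u ⬝ᵥ (G * A + (G * A)ᵀ) *ᵥ W u
        + vel V u ⬝ᵥ G *ᵥ W u + V u ⬝ᵥ G *ᵥ vel W u := by
    simp only [dotProduct, Matrix.mulVec, Finset.mul_sum, ← Finset.sum_add_distrib]
    exact Finset.sum_congr rfl fun μ _ => Finset.sum_congr rfl fun ν _ => by ring
  have transport : V u ⬝ᵥ (G * A)ᵀ *ᵥ W u = (A *ᵥ V u) ⬝ᵥ G *ᵥ W u := by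
    rw [Matrix.transpose_mul, (hg.isSymm _).eq, ← Matrix.mulVec_mulVec, Matrix.dotProduct_mulVec,
      Matrix.vecMul_transpose]
  rw [expand, sq_eq_dotProduct, sq_eq_dotProduct, covD_eq_vel_add_mulVec, covD_eq_vel_add_mulVec,
    ← hA, Matrix.add_mulVec, dotProduct_add, transport, add_dotProduct, Matrix.mulVec_add,
    dotProduct_add, Matrix.mulVec_mulVec]
  ring

theorem sq_eq_of_isParallel (hg : SmoothMetric g) {γ V W : ℝ → ι → ℝ} (hγ : Differentiable ℝ γ)
    (hV : Differentiable ℝ V) (hW : Differentiable ℝ W) (hVpar : IsParallel g γ V)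
    (hWpar : IsParallel g γ W) (u s : ℝ) :
    sq g (γ u) (V u) (W u) = sq g (γ s) (V s) (W s) := by
  have hderiv (w : ℝ) : HasDerivAt (fun w => sq g (γ w) (V w) (W w)) 0 w := by
    have covD_zero {X : ℝ → ι → ℝ} (hX : IsParallel g γ X) : covD g γ X w = 0 := funext (hX w)
    simpa [covD_zero hVpar, covD_zero hWpar, sq_eq_dotProduct] using
      hasDerivAt_sq hg (hγ w) (hV w) (hW w)
  exact is_const_of_deriv_eq_zero (fun w => (hderiv w).differentiableAt)
    (fun w => (hderiv w).deriv) u s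

end Connection

section Curvature

variable {g : (ι → ℝ) → Matrix ι ι ℝ}

/-- The curvature matrix `(R_{μν})^α_β = R^α_{βμν}`, the `(μ, ν)` component of the
endomorphism-valued curvature 2-form. -/
def riemMatrix (g : (ι → ℝ) → Matrix ι ι ℝ) (μ ν : ι) (x : ι → ℝ) : Matrix ι ι ℝ :=
  Matrix.of fun α β => Riem g α β μ ν x

lemma riemMatrix_eq (g : (ι → ℝ) → Matrix ι ι ℝ) (μ ν : ι) (x : ι → ℝ) :
    riemMatrix g μ ν x = pdMatrix (conn g ν) μ x - pdMatrix (conn g μ) ν x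
      + conn g μ x * conn g ν x - conn g ν x * conn g μ x := rfl

lemma RiemLow_eq_mul_riemMatrix (g : (ι → ℝ) → Matrix ι ι ℝ) (α β μ ν : ι) (x : ι → ℝ) :
    RiemLow g α β μ ν x = (g x * riemMatrix g μ ν x) α β := rfl

lemma pdMatrix_pdMatrix_metric (hg : SmoothMetric g) (μ ν : ι) (x : ι → ℝ) :
    pdMatrix (pdMatrix g ν) μ x =
      (pdMatrix g μ x * conn g ν x + g x * pdMatrix (conn g ν) μ x)
        + (pdMatrix g μ x * conn g ν x + g x * pdMatrix (conn g ν) μ x)ᵀ := by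
  have hG (a b : ι) := hg.differentiable a b x
  have hC (a b : ι) := differentiable_conn hg ν a b x
  have hGC (a b : ι) : DifferentiableAt ℝ (fun y => (g y * conn g ν y) a b) x := by
    simp only [Matrix.mul_apply]
    exact DifferentiableAt.fun_sum fun c _ => (hG a c).mul (hC c b)
  have metric_compatible : pdMatrix g ν = fun y => g y * conn g ν y + (g y * conn g ν y)ᵀ :=
    funext (pdMatrix_metric hg ν)
  rw [metric_compatible, pdMatrix_add hGC (B := fun y => (g y * conn g ν y)ᵀ) fun a b => hGC b a,
    pdMatrix_transpose, pdMatrix_mul hG hC]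

lemma transpose_mul_riemMatrix (hg : SmoothMetric g) (μ ν : ι) (x : ι → ℝ) :
    (g x * riemMatrix g μ ν x)ᵀ = -(g x * riemMatrix g μ ν x) := by
  have second_partials_comm := pdMatrix_comm (A := g) (x := x)
    (fun a b => (hg.1 a b).contDiffAt.of_le (WithTop.coe_le_coe.2 le_top)) ν μ
  rw [pdMatrix_pdMatrix_metric hg, pdMatrix_pdMatrix_metric hg, pdMatrix_metric hg,
    pdMatrix_metric hg] at second_partials_comm
  rw [eq_neg_iff_add_eq_zero, ← sub_eq_zero.2 second_partials_comm, riemMatrix_eq]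
  simp only [Matrix.transpose_add, Matrix.transpose_sub, Matrix.transpose_mul,
    Matrix.transpose_transpose, (hg.isSymm x).eq]
  noncomm_ring

lemma RiemLow_antisymm_left (hg : SmoothMetric g) (α β μ ν : ι) (x : ι → ℝ) :
    RiemLow g α β μ ν x = -RiemLow g β α μ ν x :=
  congrFun₂ (transpose_mul_riemMatrix hg μ ν x) β α

lemma RiemLow_antisymm_right (g : (ι → ℝ) → Matrix ι ι ℝ) (α β μ ν : ι) (x : ι → ℝ) :
    RiemLow g α β μ ν x = -RiemLow g α β ν μ x := by
  have riemMatrix_antisymm : riemMatrix g μ ν x = -riemMatrix g ν μ x := by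
    rw [riemMatrix_eq, riemMatrix_eq]
    abel
  rw [RiemLow_eq_mul_riemMatrix, riemMatrix_antisymm, Matrix.mul_neg, Matrix.neg_apply,
    ← RiemLow_eq_mul_riemMatrix]

lemma sum_ginv_mul_RiemLow {x : ι → ℝ} (hx : IsUnit (g x).det) (μ β ρ σ : ι) :
    ∑ α, ginv g x μ α * RiemLow g α β ρ σ x = Riem g μ β ρ σ x :=
  congrFun₂ (Matrix.nonsing_inv_mul_cancel_left (g x) (riemMatrix g ρ σ x) hx) μ β

lemma sum_RiemLow_mul_ginv (hg : SmoothMetric g) (μ ρ : ι) (x : ι → ℝ) :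
    ∑ ν, ∑ σ, RiemLow g μ ν ρ σ x * ginv g x ν σ = Ric g μ ρ x := by
  have ginv_symm (ν σ : ι) : ginv g x ν σ = ginv g x σ ν := (hg.isSymm x).inv.apply σ ν
  rw [Finset.sum_comm]
  refine Finset.sum_congr rfl fun σ _ => ?_
  rw [← sum_ginv_mul_RiemLow (hg.2.2 x)]
  refine Finset.sum_congr rfl fun ν _ => ?_
  rw [RiemLow_antisymm_left hg, RiemLow_antisymm_right, neg_neg, ginv_symm, mul_comm]

/-- The tidal form `R_{μνρσ} N^μ N^ρ` in the indices `ν, σ`, which governs the geodesic deviation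
along geodesics with tangent `N`. -/
def tidal (g : (ι → ℝ) → Matrix ι ι ℝ) (x N : ι → ℝ) : Matrix ι ι ℝ :=
  Matrix.of fun ν σ => ∑ μ, ∑ ρ, RiemLow g μ ν ρ σ x * N μ * N ρ

lemma sum_RiemLow_mul_eq_sum_tidal_mul (g : (ι → ℝ) → Matrix ι ι ℝ) (x N : ι → ℝ)
    (P : ι → ι → ℝ) :
    ∑ μ, ∑ ν, ∑ ρ, ∑ σ, RiemLow g μ ν ρ σ x * N μ * N ρ * P ν σ =
      ∑ ν, ∑ σ, tidal g x N ν σ * P ν σ := by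
  rw [Finset.sum_comm]
  refine Finset.sum_congr rfl fun ν _ => ?_
  simp only [tidal, Matrix.of_apply, Finset.sum_mul]
  exact (Finset.sum_congr rfl fun μ _ => Finset.sum_comm).trans Finset.sum_comm

lemma tidal_mulVec_self (g : (ι → ℝ) → Matrix ι ι ℝ) (x N : ι → ℝ) : tidal g x N *ᵥ N = 0 := by
  funext ν
  calc ∑ σ, tidal g x N ν σ * N σ
      = ∑ σ, ∑ μ, ∑ ρ, N μ * (RiemLow g μ ν ρ σ x * N ρ * N σ) := by
        simp only [tidal, Matrix.of_apply, Finset.sum_mul]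
        exact Finset.sum_congr rfl fun σ _ => Finset.sum_congr rfl fun μ _ =>
          Finset.sum_congr rfl fun ρ _ => by ring
    _ = ∑ μ, N μ * ∑ ρ, ∑ σ, RiemLow g μ ν ρ σ x * N ρ * N σ := by
        rw [Finset.sum_comm]
        simp only [Finset.mul_sum]
        exact Finset.sum_congr rfl fun μ _ => Finset.sum_comm
    _ = 0 := Finset.sum_eq_zero fun μ _ => by
        rw [sum_sum_mul_mul_eq_zero_of_antisymm fun ρ σ => RiemLow_antisymm_right g μ ν ρ σ x,
          mul_zero]

lemma vecMul_tidal_self (hg : SmoothMetric g) (x N : ι → ℝ) : N ᵥ* tidal g x N = 0 := by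
  funext σ
  calc ∑ ν, N ν * tidal g x N ν σ
      = ∑ ν, ∑ μ, ∑ ρ, N ρ * (RiemLow g μ ν ρ σ x * N μ * N ν) := by
        simp only [tidal, Matrix.of_apply, Finset.mul_sum]
        exact Finset.sum_congr rfl fun ν _ => Finset.sum_congr rfl fun μ _ =>
          Finset.sum_congr rfl fun ρ _ => by ring
    _ = ∑ ρ, N ρ * ∑ μ, ∑ ν, RiemLow g μ ν ρ σ x * N μ * N ν := by
        simp only [Finset.mul_sum]
        exact Finset.sum_comm.trans <|
          (Finset.sum_congr rfl fun μ _ => Finset.sum_comm).trans Finset.sum_comm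
    _ = 0 := Finset.sum_eq_zero fun ρ _ => by
        rw [sum_sum_mul_mul_eq_zero_of_antisymm fun μ ν => RiemLow_antisymm_left hg μ ν ρ σ x,
          mul_zero]

lemma sum_tidal_mul_ginv (hg : SmoothMetric g) (x N : ι → ℝ) :
    ∑ ν, ∑ σ, tidal g x N ν σ * ginv g x ν σ = ∑ μ, ∑ ρ, Ric g μ ρ x * N μ * N ρ := by
  rw [← sum_RiemLow_mul_eq_sum_tidal_mul (P := ginv g x)]
  refine Finset.sum_congr rfl fun μ _ => ?_
  rw [Finset.sum_comm]
  refine Finset.sum_congr rfl fun ρ _ => ?_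
  simp only [← sum_RiemLow_mul_ginv hg, Finset.sum_mul]
  exact Finset.sum_congr rfl fun ν _ => Finset.sum_congr rfl fun σ _ => by ring

lemma sum_RiemLow_mul_eq_sum_Ric (hg : SmoothMetric g) {x N L : ι → ℝ} {P : ι → ι → ℝ} {c : ℝ}
    (hP : ∀ ν σ, P ν σ = ginv g x ν σ - c * (N ν * L σ + N σ * L ν)) :
    ∑ μ, ∑ ν, ∑ ρ, ∑ σ, RiemLow g μ ν ρ σ x * N μ * N ρ * P ν σ =
      ∑ μ, ∑ ρ, Ric g μ ρ x * N μ * N ρ := by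
  have contract_left : ∑ ν, ∑ σ, tidal g x N ν σ * (N ν * L σ) = 0 := by
    calc ∑ ν, ∑ σ, tidal g x N ν σ * (N ν * L σ) = (N ᵥ* tidal g x N) ⬝ᵥ L := by
          simp only [Matrix.vecMul, dotProduct, Finset.sum_mul]
          rw [Finset.sum_comm]
          exact Finset.sum_congr rfl fun σ _ => Finset.sum_congr rfl fun ν _ => by ring
      _ = 0 := by rw [vecMul_tidal_self hg, zero_dotProduct]
  have contract_right : ∑ ν, ∑ σ, tidal g x N ν σ * (N σ * L ν) = 0 := by
    calc ∑ ν, ∑ σ, tidal g x N ν σ * (N σ * L ν) = L ⬝ᵥ tidal g x N *ᵥ N := by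
          simp only [Matrix.mulVec, dotProduct, Finset.mul_sum]
          exact Finset.sum_congr rfl fun ν _ => Finset.sum_congr rfl fun σ _ => by ring
      _ = 0 := by rw [tidal_mulVec_self, dotProduct_zero]
  rw [sum_RiemLow_mul_eq_sum_tidal_mul, ← sum_tidal_mul_ginv hg]
  simp only [hP, mul_sub, mul_add, mul_left_comm _ c, Finset.sum_sub_distrib,
    Finset.sum_add_distrib, ← Finset.mul_sum, contract_left, contract_right, mul_zero, add_zero,
    sub_zero]

end Curvature

section NullFrame

variable {g : (ι → ℝ) → Matrix ι ι ℝ} {x N L : ι → ℝ} {E : κ → ι → ℝ} {h : Matrix κ κ ℝ}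

/-- The projector `P^{μν} = γ^{AB} E_A^μ E_B^ν` onto the span of the vectors `E`, where `h` is their
first fundamental form `γ_{AB}`. -/
def frameProjector (h : Matrix κ κ ℝ) (E : κ → ι → ℝ) : Matrix ι ι ℝ :=
  (Matrix.of E)ᵀ * h⁻¹ * Matrix.of E

omit [Fintype ι] [DecidableEq ι] in
lemma frameProjector_one_apply (E : κ → ι → ℝ) (μ ν : ι) :
    frameProjector 1 E μ ν = ∑ A, E A μ * E A ν := by
  simp [frameProjector, Matrix.mul_apply]

/-- `N` and `L` are null vectors at `x` with nonzero scalar product, both orthogonal to the vectors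
`E`, whose first fundamental form is the nondegenerate matrix `h`. In the notation of the paper,
`E` is a tangent basis of `ζ`, `h` is `γ_{AB}`, and `N`, `L` are the two null normals. -/
structure IsNullFrame (g : (ι → ℝ) → Matrix ι ι ℝ) (x N L : ι → ℝ) (E : κ → ι → ℝ)
    (h : Matrix κ κ ℝ) : Prop where
  isUnit_det : IsUnit h.det
  firstFF_eq : ∀ A B, sq g x (E A) (E B) = h A B
  orthogonal_left : ∀ A, sq g x N (E A) = 0
  orthogonal_right : ∀ A, sq g x L (E A) = 0
  null_left : sq g x N N = 0
  null_right : sq g x L L = 0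
  sq_ne_zero : sq g x N L ≠ 0

theorem IsNullFrame.of_isParallel (hg : SmoothMetric g) {γ N L : ℝ → ι → ℝ} {E : κ → ℝ → ι → ℝ}
    (hγ : Differentiable ℝ γ) (hN : Differentiable ℝ N) (hL : Differentiable ℝ L)
    (hE : ∀ A, Differentiable ℝ (E A)) (hNpar : IsParallel g γ N) (hLpar : IsParallel g γ L)
    (hEpar : ∀ A, IsParallel g γ (E A)) {s : ℝ}
    (hs : IsNullFrame g (γ s) (N s) (L s) (fun A => E A s) h) (u : ℝ) :
    IsNullFrame g (γ u) (N u) (L u) (fun A => E A u) h where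
  isUnit_det := hs.isUnit_det
  firstFF_eq A B := by
    rw [sq_eq_of_isParallel hg hγ (hE A) (hE B) (hEpar A) (hEpar B) u s, hs.firstFF_eq]
  orthogonal_left A := by
    rw [sq_eq_of_isParallel hg hγ hN (hE A) hNpar (hEpar A) u s, hs.orthogonal_left]
  orthogonal_right A := by
    rw [sq_eq_of_isParallel hg hγ hL (hE A) hLpar (hEpar A) u s, hs.orthogonal_right]
  null_left := by rw [sq_eq_of_isParallel hg hγ hN hN hNpar hNpar u s, hs.null_left]
  null_right := by rw [sq_eq_of_isParallel hg hγ hL hL hLpar hLpar u s, hs.null_right]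
  sq_ne_zero := by
    rw [sq_eq_of_isParallel hg hγ hN hL hNpar hLpar u s]
    exact hs.sq_ne_zero

omit [DecidableEq ι] in
lemma IsNullFrame.gram_eq_fromBlocks (hx : (g x).IsSymm) (hf : IsNullFrame g x N L E h) :
    Matrix.fromRows (Matrix.of E) (Matrix.of ![N, L]) * g x *
        (Matrix.fromRows (Matrix.of E) (Matrix.of ![N, L]))ᵀ =
      Matrix.fromBlocks h 0 0 !![0, sq g x N L; sq g x N L, 0] := by
  ext a b
  rw [mul_mul_transpose_apply_eq_sq]
  rcases a with A | i <;> rcases b with B | j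
  · exact hf.firstFF_eq A B
  · fin_cases j
    · exact (sq_comm hx _ _).trans (hf.orthogonal_left A)
    · exact (sq_comm hx _ _).trans (hf.orthogonal_right A)
  · fin_cases i
    · exact hf.orthogonal_left B
    · exact hf.orthogonal_right B
  · fin_cases i <;> fin_cases j
    · exact hf.null_left
    · rfl
    · exact sq_comm hx L N
    · exact hf.null_right

theorem IsNullFrame.frameProjector_apply (hx : (g x).IsSymm) (hf : IsNullFrame g x N L E h)
    (hcard : Fintype.card ι = Fintype.card κ + 2) (μ ν : ι) :
    frameProjector h E μ ν = ginv g x μ ν - (sq g x N L)⁻¹ * (N μ * L ν + N ν * L μ) := by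
  have gram_eq := hf.gram_eq_fromBlocks hx
  set F := Matrix.fromRows (Matrix.of E) (Matrix.of ![N, L])
  have gram_mul_inv := fromBlocks_hyperbolic_mul_inv hf.isUnit_det hf.sq_ne_zero
  have completeness : ginv g x = frameProjector h E
      + (Matrix.of ![N, L])ᵀ * !![0, (sq g x N L)⁻¹; (sq g x N L)⁻¹, 0] * Matrix.of ![N, L] := by
    rw [ginv, inv_eq_transpose_mul_inv_gram_mul (by simpa using hcard) (g x) F
      (gram_eq ▸ Matrix.isUnit_det_of_right_inverse gram_mul_inv), gram_eq,
      Matrix.inv_eq_right_inv gram_mul_inv, Matrix.transpose_fromRows,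
      Matrix.fromCols_mul_fromBlocks, Matrix.fromCols_mul_fromRows]
    simp [frameProjector]
  rw [completeness]
  simp only [Matrix.add_apply, Matrix.mul_apply, Matrix.transpose_apply, Matrix.of_apply,
    Matrix.cons_val', Matrix.cons_val_fin_one, Fin.sum_univ_two, Matrix.cons_val_zero,
    Matrix.cons_val_one, mul_zero, zero_add, add_zero]
  ring

end NullFrame

theorem codim_two_projector_and_null_convergence_general
    (hcard : Fintype.card ι = Fintype.card κ + 2)
    {g : (ι → ℝ) → Matrix ι ι ℝ} (hg : SmoothMetric g)
    {γ N L : ℝ → ι → ℝ} {E : κ → ℝ → ι → ℝ} {h : Matrix κ κ ℝ}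
    (hγ : Differentiable ℝ γ) (hN : Differentiable ℝ N) (hL : Differentiable ℝ L)
    (hE : ∀ A, Differentiable ℝ (E A)) (hNpar : IsParallel g γ N) (hLpar : IsParallel g γ L)
    (hEpar : ∀ A, IsParallel g γ (E A)) {s : ℝ}
    (hs : IsNullFrame g (γ s) (N s) (L s) (fun A => E A s) h) :
    (∀ u μ ν, frameProjector h (fun A => E A u) μ ν =
      ginv g (γ u) μ ν - (sq g (γ u) (N u) (L u))⁻¹ * (N u μ * L u ν + N u ν * L u μ)) ∧
    ∀ u, ∑ μ, ∑ ν, ∑ ρ, ∑ σ, RiemLow g μ ν ρ σ (γ u) * N u μ * N u ρ *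
        frameProjector h (fun A => E A u) ν σ =
      ∑ μ, ∑ ν, Ric g μ ν (γ u) * N u μ * N u ν := by
  have projector_eq (u : ℝ) (μ ν : ι) :=
    (hs.of_isParallel hg hγ hN hL hE hNpar hLpar hEpar u).frameProjector_apply
      (hg.isSymm _) hcard μ ν
  exact ⟨projector_eq, fun u => sum_RiemLow_mul_eq_sum_Ric hg (projector_eq u)⟩


/-- For a spacelike submanifold of co-dimension 2 with null
normals `n, ℓ` at `q`, along the null geodesic with initial tangent `n`:
`P^{μν} = g^{μν} − (N_ρL^ρ)⁻¹(N^μL^ν + N^νL^μ)`, and consequently the curvature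
condition `R_{μνρσ}N^μN^ρP^{νσ} ≥ 0` along `γ` is equivalent to the null
convergence condition `R_{μν}N^μN^ν ≥ 0` along `γ`. -/
theorem codim_two_projector_and_null_convergence {D : ℕ} (hD : 2 ≤ D)
    (g : (Fin D → ℝ) → Matrix (Fin D) (Fin D) ℝ) (hg : Lorentzian g)
    (T : (Fin D → ℝ) → Fin D → ℝ) (hT : TimeOrientation g T)
    (q : Fin D → ℝ)
    -- an orthonormal basis of the tangent space of the co-dimension 2
    -- spacelike submanifold `ζ` at `q`
    (e : Fin (D - 2) → Fin D → ℝ)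
    (heON : ∀ A B, sq g q (e A) (e B) = if A = B then (1 : ℝ) else 0)
    -- the two future-pointing null normals at `q`
    (nv lv : Fin D → ℝ)
    (hn : NullVec g q nv) (hl : NullVec g q lv)
    (hnf : FutureCausal g T q nv) (hlf : FutureCausal g T q lv)
    (hne : ∀ A, sq g q nv (e A) = 0) (hle : ∀ A, sq g q lv (e A) = 0)
    (hnl : sq g q nv lv ≠ 0)
    -- the null geodesic with initial tangent `n`
    (γ : ℝ → Fin D → ℝ) (hγs : SmoothCurve γ) (hγ0 : γ 0 = q)
    (hγv : vel γ 0 = nv) (hgeo : IsGeodesic g γ)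
    -- the parallel propagations of `ℓ` and of the tangent basis along `γ`
    (L : ℝ → Fin D → ℝ) (hLs : SmoothCurve L) (hL0 : L 0 = lv)
    (hLpar : IsParallel g γ L)
    (E : Fin (D - 2) → ℝ → Fin D → ℝ)
    (hEs : ∀ A, SmoothCurve (E A)) (hE0 : ∀ A, E A 0 = e A)
    (hEpar : ∀ A, IsParallel g γ (E A)) :
    (∀ (u : ℝ) (μ ν : Fin D),
      (∑ A, E A u μ * E A u ν)
        = ginv g (γ u) μ ν
          - (sq g (γ u) (vel γ u) (L u))⁻¹
              * (vel γ u μ * L u ν + vel γ u ν * L u μ)) ∧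
    ((∀ u : ℝ, 0 ≤ ∑ μ, ∑ ν, ∑ ρ, ∑ σ, RiemLow g μ ν ρ σ (γ u)
          * vel γ u μ * vel γ u ρ * (∑ A, E A u ν * E A u σ))
      ↔ (∀ u : ℝ, 0 ≤ ∑ μ, ∑ ν, Ric g μ ν (γ u) * vel γ u μ * vel γ u ν)) := by
  have frame : IsNullFrame g q nv lv e 1 :=
    { isUnit_det := by simp
      firstFF_eq := fun A B => (heON A B).trans Matrix.one_apply.symm
      orthogonal_left := hne
      orthogonal_right := hle
      null_left := hn.1
      null_right := hl.1
      sq_ne_zero := hnl }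
  obtain rfl : (fun A => E A 0) = e := funext hE0
  subst hγ0 hγv hL0
  have hcard : Fintype.card (Fin D) = Fintype.card (Fin (D - 2)) + 2 := by
    simp only [Fintype.card_fin]
    omega
  obtain ⟨projector_eq, curvature_eq⟩ := codim_two_projector_and_null_convergence_general hcard
    hg.1 hγs.differentiable hγs.vel.differentiable hLs.differentiable
    (fun A => (hEs A).differentiable) hgeo hLpar hEpar frame
  simp only [frameProjector_one_apply] at projector_eq curvature_eq
  exact ⟨projector_eq, forall_congr' fun u => by rw [curvature_eq u]⟩

end Paper
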